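/- Let d ≥ 2, let Λ ⊂ ℝ^d be a full-rank lattice, and let ε > 0. Then for Haar-almost every U ∈ SO(d) there exists a constant c > 0 such that every x ∈ UΛ \ {0} satisfies ∏_{j=1}^d |x_j| ≥ c · (log(1 + |x|))^{1−d−ε}. -/

import Mathlib

/-! The argument combines a sharp volume estimate with the Borel–Cantelli lemma.

For a fixed vector `x ≠ 0`, the vector `U x` is uniformly distributed on a sphere when `U` is
Haar-random. Fubini's theorem turns the Haar measure of `{U | U x ∈ E}`, for a cone `E`, into the
Lebesgue measure of `E` in a Euclidean shell (`cone_measure`); this uses that `SO(d)` is transitive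
on spheres (`exists_rotation`) and unimodular (`haar_mul_right`). For the cone
`∏ |v j| < t |v|₂ ^ d`, some coordinate of a vector of the shell is bounded below, so only `d - 1`
coordinates matter. Integrating one of them exactly and controlling the remaining `d - 2` by the
moments `∫ |a| ^ (-s)` bounds the measure by `C t ^ s (1 - s) ^ (2 - d)` for every `s ∈ [0, 1)`
(`exists_haar_bound`), which amounts to `t log (1 / t) ^ (d - 2)` after optimising in `s`.

There are `O(2 ^ (k d))` lattice points whose integer coordinates have size about `2 ^ k`, and for
each of them the event `∏ |(U x) j| < (k + 1) ^ (1 - d - ε)` corresponds to `t` of order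
`2 ^ (-k d) (k + 1) ^ (1 - d - ε)`. Taking `1 - s = 1 / (k + 2)`, the `k`-th block has total measure
`O((k + 1) ^ (-1 - ε))`, which is summable, so almost every `U` has only finitely many bad blocks
(`ae_eventually_good`). In the good blocks the norm of `U x` is at least a multiple of `2 ^ k`, so
`log (1 + ‖U x‖)` is at least a multiple of `k + 1`. The finitely many points of the other blocks
only require that `U x` has no zero coordinate, which holds almost surely (`ae_prod_ne_zero`).
-/

open MeasureTheory Filter Set

noncomputable section

instance matrixMeasurableSpace (d : ℕ) : MeasurableSpace (Matrix (Fin d) (Fin d) ℝ) :=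
  inferInstanceAs (MeasurableSpace (Fin d → Fin d → ℝ))

/-- The special orthogonal group `SO(d)` as a subgroup of the orthogonal group. -/
def SOGroup (d : ℕ) : Subgroup ↥(Matrix.orthogonalGroup (Fin d) ℝ) where
  carrier := {U | ((U : Matrix (Fin d) (Fin d) ℝ)).det = 1}
  one_mem' := by simp
  mul_mem' := by
    intro a b ha hb
    simp only [Set.mem_setOf_eq] at *
    rw [Submonoid.coe_mul, Matrix.det_mul, ha, hb, one_mul]
  inv_mem' := by
    intro a ha
    simp only [Set.mem_setOf_eq] at *
    have h : ((a : Matrix (Fin d) (Fin d) ℝ) * ((a⁻¹ : ↥(Matrix.orthogonalGroup (Fin d) ℝ)) :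
        Matrix (Fin d) (Fin d) ℝ)) = 1 := by
      rw [← Submonoid.coe_mul, mul_inv_cancel, Submonoid.coe_one]
    have := congrArg Matrix.det h
    rw [Matrix.det_mul, ha, one_mul, Matrix.det_one] at this
    exact this

/-- A full-rank lattice in `ℝ^d`: the set of integer linear combinations of a basis of `ℝ^d`. -/
def IsFullLattice {d : ℕ} (Λ : Set (Fin d → ℝ)) : Prop :=
  ∃ b : Fin d → (Fin d → ℝ), LinearIndependent ℝ b ∧
    Λ = {x | ∃ z : Fin d → ℤ, x = ∑ i, (z i : ℝ) • b i}

/-! ### Transitivity of `SO(d)` on spheres -/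

/-- The Householder matrix of the reflection in the hyperplane orthogonal to `v`
(for `v = 0` it is the identity, through `2 / 0 = 0`). -/
def householder {d : ℕ} (v : Fin d → ℝ) : Matrix (Fin d) (Fin d) ℝ :=
  1 - (2 / (v ⬝ᵥ v)) • Matrix.vecMulVec v v

lemma householder_mulVec {d : ℕ} (v x : Fin d → ℝ) :
    (householder v).mulVec x = x - (2 * (v ⬝ᵥ x) / (v ⬝ᵥ v)) • v := by
  rw [householder, Matrix.sub_mulVec, Matrix.one_mulVec, Matrix.smul_mulVec,
    Matrix.vecMulVec_mulVec]
  ext i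
  simp
  ring

lemma dot_self_ne_zero {d : ℕ} {v : Fin d → ℝ} (hv : v ≠ 0) : v ⬝ᵥ v ≠ 0 :=
  fun h => hv (dotProduct_self_eq_zero.1 h)

lemma householder_mem {d : ℕ} {v : Fin d → ℝ} (hv : v ≠ 0) :
    householder v ∈ Matrix.orthogonalGroup (Fin d) ℝ := by
  have h0 := dot_self_ne_zero hv
  have ht : (householder v).transpose = householder v := by
    ext i j
    simp only [householder, Matrix.transpose_apply, Matrix.sub_apply, Matrix.smul_apply,
      Matrix.vecMulVec_apply, Matrix.one_apply, smul_eq_mul, eq_comm (a := i)]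
    ring
  rw [Matrix.mem_orthogonalGroup_iff, ht]
  apply Matrix.toLin'.injective
  apply LinearMap.ext
  intro x
  rw [Matrix.toLin'_apply, ← Matrix.mulVec_mulVec, householder_mulVec, householder_mulVec]
  ext i
  simp only [dotProduct_sub, dotProduct_smul, Pi.sub_apply, Pi.smul_apply, smul_eq_mul,
    Matrix.toLin'_one, LinearMap.id_apply]
  field_simp
  ring

lemma householder_det {d : ℕ} {v : Fin d → ℝ} (hv : v ≠ 0) : (householder v).det = -1 := by
  have h0 := dot_self_ne_zero hv
  have : householder v = 1 + Matrix.replicateCol Unit ((-(2 / (v ⬝ᵥ v))) • v) *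
      Matrix.replicateRow Unit v := by
    rw [← Matrix.vecMulVec_eq, Matrix.smul_vecMulVec, householder, neg_smul, sub_eq_add_neg]
  rw [this, Matrix.det_one_add_replicateCol_mul_replicateRow, dotProduct_smul, smul_eq_mul]
  field_simp
  norm_num

lemma exists_orthogonal {d : ℕ} (hd : 2 ≤ d) (y : Fin d → ℝ) :
    ∃ w : Fin d → ℝ, w ≠ 0 ∧ w ⬝ᵥ y = 0 := by
  let i : Fin d := ⟨0, by omega⟩
  let j : Fin d := ⟨1, by omega⟩
  have hij : i ≠ j := by simp [i, j]
  by_cases h : y i = 0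
  · exact ⟨Pi.single i 1, by simp, by simp [h]⟩
  · refine ⟨y j • Pi.single i 1 - y i • Pi.single j 1, fun h' => ?_, ?_⟩
    · have := congrFun h' j
      simp [hij.symm, h] at this
    · simp [sub_dotProduct]
      ring

/-- `SO(d)` acts transitively on Euclidean spheres when `d ≥ 2`: the product of the reflection
exchanging `x` and `y` with a reflection fixing `y` is a rotation taking `x` to `y`. -/
lemma exists_rotation {d : ℕ} (hd : 2 ≤ d) {x y : Fin d → ℝ} (h : x ⬝ᵥ x = y ⬝ᵥ y) :
    ∃ U : SOGroup d, (U.1.1).mulVec x = y := by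
  by_cases hxy : x = y
  · exact ⟨1, by simp [hxy]⟩
  obtain ⟨w, hw, hwy⟩ := exists_orthogonal hd y
  have hv : x - y ≠ 0 := sub_ne_zero.2 hxy
  refine ⟨⟨⟨_, mul_mem (householder_mem hw) (householder_mem hv)⟩, ?_⟩, ?_⟩
  · change Matrix.det _ = 1
    simp [Matrix.det_mul, householder_det hw, householder_det hv]
  · have h1 : (householder (x - y)).mulVec x = y := by
      rw [householder_mulVec]
      have h2 : 2 * ((x - y) ⬝ᵥ x) / ((x - y) ⬝ᵥ (x - y)) = 1 := by
        rw [div_eq_one_iff_eq (dot_self_ne_zero hv)]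
        simp only [sub_dotProduct, dotProduct_sub, dotProduct_comm y x]
        linarith
      rw [h2]; simp
    change (householder w * householder (x - y)).mulVec x = y
    rw [← Matrix.mulVec_mulVec, h1, householder_mulVec, hwy]
    simp

/-! ### Haar measure on `SO(d)` and Lebesgue measure of cones -/

instance matrixBorelSpace (d : ℕ) : BorelSpace (Matrix (Fin d) (Fin d) ℝ) :=
  inferInstanceAs (BorelSpace (Fin d → Fin d → ℝ))

instance matrixSecondCountable (d : ℕ) :
    SecondCountableTopology (Matrix (Fin d) (Fin d) ℝ) :=
  inferInstanceAs (SecondCountableTopology (Fin d → Fin d → ℝ))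

lemma isCompact_orthogonal (d : ℕ) :
    IsCompact (Matrix.orthogonalGroup (Fin d) ℝ : Set (Matrix (Fin d) (Fin d) ℝ)) := by
  have hc : IsCompact (Set.pi univ fun _ : Fin d => Set.pi univ fun _ : Fin d =>
      Icc (-1 : ℝ) 1) :=
    isCompact_univ_pi fun _ => isCompact_univ_pi fun _ => isCompact_Icc
  refine IsCompact.of_isClosed_subset hc (isClosed_unitary (R := Matrix (Fin d) (Fin d) ℝ)) ?_
  intro U hU i _ j _
  have := entry_norm_bound_of_unitary hU i j
  rwa [Real.norm_eq_abs, abs_le] at this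

instance compactSO (d : ℕ) : CompactSpace (SOGroup d) := by
  have : CompactSpace (Matrix.orthogonalGroup (Fin d) ℝ) :=
    isCompact_iff_compactSpace.1 (isCompact_orthogonal d)
  have hcl : IsClosed (SOGroup d : Set (Matrix.orthogonalGroup (Fin d) ℝ)) := by
    change IsClosed {U : Matrix.orthogonalGroup (Fin d) ℝ |
      (U : Matrix (Fin d) (Fin d) ℝ).det = 1}
    exact isClosed_eq (continuous_subtype_val.matrix_det) continuous_const
  exact isCompact_iff_compactSpace.1 hcl.isCompact

/-- A Haar measure on a compact group is right invariant: its right translates are Haar measures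
of the same finite total mass. -/
lemma haar_mul_right {G : Type*} [Group G] [TopologicalSpace G] [IsTopologicalGroup G]
    [CompactSpace G] [MeasurableSpace G] [BorelSpace G] (μ : Measure G) [μ.IsHaarMeasure]
    (g : G) : Measure.map (· * g) μ = μ := by
  have h := Measure.isMulInvariant_eq_smul_of_compactSpace (Measure.map (· * g) μ) μ
  have h1 := congrArg (fun ν : Measure G => ν univ) h
  simp only [Measure.map_apply (measurable_mul_const g) MeasurableSet.univ, preimage_univ,
    Measure.smul_apply] at h1
  rw [h]
  set c := Measure.haarScalarFactor (Measure.map (· * g) μ) μ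
  have h2 : (1 : ENNReal) * μ univ = c * μ univ := by simpa [ENNReal.smul_def] using h1
  have h3 := (ENNReal.mul_left_inj (NeZero.ne _) (measure_ne_top μ univ)).1 h2
  have h4 : c = 1 := by exact_mod_cast h3.symm
  rw [h4, one_smul]

lemma measurable_action (d : ℕ) :
    Measurable fun p : SOGroup d × (Fin d → ℝ) => (p.1.1.1).mulVec p.2 := by
  apply Continuous.measurable
  exact (continuous_subtype_val.comp (continuous_subtype_val.comp continuous_fst)).matrix_mulVec
    continuous_snd

lemma dot_mulVec {d : ℕ} (U : SOGroup d) (v : Fin d → ℝ) :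
    (U.1.1).mulVec v ⬝ᵥ (U.1.1).mulVec v = v ⬝ᵥ v := by
  have h : (U.1.1).transpose * U.1.1 = 1 := (Matrix.mem_orthogonalGroup_iff' _ _).1 U.1.2
  rw [Matrix.dotProduct_mulVec, Matrix.vecMul_mulVec, h, Matrix.vecMul_one]

lemma volume_rotation {d : ℕ} (U : SOGroup d) {A : Set (Fin d → ℝ)} (hA : MeasurableSet A) :
    volume {v | (U.1.1).mulVec v ∈ A} = volume A := by
  have hU : (U.1.1).det = 1 := U.2
  have h := Real.map_matrix_volume_pi_eq_smul_volume_pi (M := U.1.1) (by rw [hU]; norm_num)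
  have h2 := congrArg (fun ν : Measure (Fin d → ℝ) => ν A) h
  rw [hU] at h2
  simp only [inv_one, abs_one, ENNReal.ofReal_one, one_smul] at h2
  rwa [Measure.map_apply _ hA] at h2
  exact (LinearMap.continuous_on_pi _).measurable

/-- The Haar measure of the set of rotations taking a nonzero vector into a cone `E` is governed by
the Lebesgue measure of `E` inside a rotation-invariant region `B`. It is Fubini's theorem for
`{(U, v) | v ∈ B, U v ∈ E}`, since `μ {U | U v ∈ E}` does not depend on `v ≠ 0`. -/
lemma cone_measure {d : ℕ} (hd : 2 ≤ d) (μ : Measure (SOGroup d)) [μ.IsHaarMeasure]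
    {E B : Set (Fin d → ℝ)} (hE : MeasurableSet E) (hB : MeasurableSet B)
    (hcone : ∀ c : ℝ, 0 < c → ∀ v ∈ E, c • v ∈ E)
    (hrot : ∀ (U : SOGroup d) v, (U.1.1).mulVec v ∈ B ↔ v ∈ B)
    (hB0 : (0 : Fin d → ℝ) ∉ B) {x : Fin d → ℝ} (hx : x ≠ 0) :
    μ {U | (U.1.1).mulVec x ∈ E} * volume B = μ univ * volume (B ∩ E) := by
  have hconst : ∀ v ∈ B, μ {U | (U.1.1).mulVec v ∈ E} = μ {U | (U.1.1).mulVec x ∈ E} := by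
    intro v hv
    have hv0 : v ≠ 0 := fun h => hB0 (h ▸ hv)
    have hxx : 0 < x ⬝ᵥ x := lt_of_le_of_ne (Finset.sum_nonneg fun i _ => mul_self_nonneg (x i))
      (dot_self_ne_zero hx).symm
    have hvv : 0 < v ⬝ᵥ v := lt_of_le_of_ne (Finset.sum_nonneg fun i _ => mul_self_nonneg (v i))
      (dot_self_ne_zero hv0).symm
    set c := √(v ⬝ᵥ v / x ⬝ᵥ x) with hc
    have hc0 : 0 < c := Real.sqrt_pos.2 (div_pos hvv hxx)
    obtain ⟨V, hV⟩ := exists_rotation hd (x := c • x) (y := v) (by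
      simp only [smul_dotProduct, dotProduct_smul, smul_eq_mul]
      rw [← mul_assoc, hc, Real.mul_self_sqrt (div_pos hvv hxx).le]
      field_simp)
    have hmS : MeasurableSet {U : SOGroup d | (U.1.1).mulVec x ∈ E} :=
      ((measurable_action d).comp (measurable_id.prodMk measurable_const)) hE
    have hS := congrArg (fun ν : Measure (SOGroup d) => ν {U | (U.1.1).mulVec x ∈ E})
      (haar_mul_right μ V)
    simp only [Measure.map_apply (measurable_mul_const V) hmS] at hS
    rw [← hS]
    congr 1
    ext U
    have h1 : ((U * V).1.1).mulVec x = (c⁻¹) • (U.1.1).mulVec v := by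
      change (U.1.1 * V.1.1).mulVec x = _
      rw [← Matrix.mulVec_mulVec, ← hV, Matrix.mulVec_smul, Matrix.mulVec_smul, smul_smul,
        inv_mul_cancel₀ hc0.ne', one_smul]
    simp only [mem_ofPred_eq, mem_preimage]
    rw [h1]
    refine ⟨fun h => hcone _ (inv_pos.2 hc0) _ h, fun h => ?_⟩
    have := hcone c hc0 _ h
    rwa [smul_smul, mul_inv_cancel₀ hc0.ne', one_smul] at this
  have hm : MeasurableSet {p : SOGroup d × (Fin d → ℝ) | p.2 ∈ B ∧ (p.1.1.1).mulVec p.2 ∈ E} :=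
    (measurable_snd hB).inter (measurable_action d hE)
  have h1 := Measure.prod_apply (μ := μ) (ν := (volume : Measure (Fin d → ℝ))) hm
  have h2 := Measure.prod_apply_symm (μ := μ) (ν := (volume : Measure (Fin d → ℝ))) hm
  rw [h1] at h2
  have h3 : ∀ U : SOGroup d, volume (Prod.mk U ⁻¹'
      {p : SOGroup d × (Fin d → ℝ) | p.2 ∈ B ∧ (p.1.1.1).mulVec p.2 ∈ E}) = volume (B ∩ E) := by
    intro U
    rw [← volume_rotation U (hB.inter hE)]
    congr 1
    ext v
    simp [hrot]
  have h4 : ∀ v : Fin d → ℝ, μ ((fun U => (U, v)) ⁻¹'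
      {p : SOGroup d × (Fin d → ℝ) | p.2 ∈ B ∧ (p.1.1.1).mulVec p.2 ∈ E}) =
      B.indicator (fun _ => μ {U | (U.1.1).mulVec x ∈ E}) v := by
    intro v
    by_cases hv : v ∈ B
    · rw [indicator_of_mem hv, ← hconst v hv]
      simp [hv]
    · simp [hv]
  simp only [h3, h4] at h2
  rw [lintegral_const, lintegral_indicator hB, setLIntegral_const] at h2
  rw [← h2, mul_comm]

/-! ### Volume of hyperbolic crosses -/

lemma integral_moment {s : ℝ} (hs1 : s < 1) :
    ∫ a : ℝ, (Iic (1 : ℝ)).indicator (fun r => r ^ (-s)) |a| = 2 * (1 - s)⁻¹ := by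
  rw [integral_comp_abs (f := (Iic (1 : ℝ)).indicator (fun r => r ^ (-s))),
    setIntegral_indicator measurableSet_Iic, Ioi_inter_Iic,
    ← intervalIntegral.integral_of_le zero_le_one, integral_rpow (Or.inl (by linarith))]
  rw [Real.one_rpow, Real.zero_rpow (by linarith), sub_zero, one_div]
  ring_nf

lemma lintegral_moment {s : ℝ} (hs1 : s < 1) (m : ℕ) :
    ∫⁻ u : Fin m → ℝ, ENNReal.ofReal
      (∏ j, (Iic (1 : ℝ)).indicator (fun r => r ^ (-s)) |u j|) =
      ENNReal.ofReal ((2 * (1 - s)⁻¹) ^ m) := by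
  have h1 := integral_moment hs1
  have hpos : 0 < 2 * (1 - s)⁻¹ := by
    have : 0 < 1 - s := by linarith
    positivity
  -- a function whose Bochner integral is nonzero is integrable
  have hi : Integrable fun a : ℝ => (Iic (1 : ℝ)).indicator (fun r => r ^ (-s)) |a| := by
    by_contra h
    rw [integral_undef h] at h1
    exact hpos.ne h1
  rw [← ofReal_integral_eq_lintegral_ofReal]
  · rw [integral_fintype_prod_volume_eq_pow
      (fun a : ℝ => (Iic (1 : ℝ)).indicator (fun r => r ^ (-s)) |a|), h1, Fintype.card_fin]
  · exact Integrable.fintype_prod (fun _ => hi)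
  · exact Eventually.of_forall fun u => Finset.prod_nonneg fun j _ =>
      indicator_apply_nonneg fun _ => Real.rpow_nonneg (abs_nonneg _) _

lemma min_le_rpow {y s : ℝ} (hy : 0 < y) (hs : 0 ≤ s) (hs1 : s < 1) : min 1 y ≤ y ^ s := by
  rcases le_total 1 y with h | h
  · exact (min_le_left _ _).trans (Real.one_le_rpow h hs)
  · calc min 1 y ≤ y := min_le_right _ _
      _ = y ^ (1 : ℝ) := (Real.rpow_one y).symm
      _ ≤ y ^ s := Real.rpow_le_rpow_of_exponent_ge hy h hs1.le

/-- Volume of the hyperbolic cross `∏ |w j| < t` in the unit cube of dimension `m + 1`. One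
coordinate is integrated exactly and only the other `m` are bounded through the moments
`∫ |a| ^ (-s)`, so that the choice `1 - s ≈ 1 / log (1 / t)` gives the sharp order
`t * log (1 / t) ^ m`. -/
lemma volume_cross (m : ℕ) {t s : ℝ} (ht : 0 < t) (hs : 0 ≤ s) (hs1 : s < 1) :
    volume {w : Fin (m + 1) → ℝ | (∀ j, |w j| ≤ 1) ∧ ∏ j, |w j| < t} ≤
      ENNReal.ofReal (2 * t ^ s * (2 * (1 - s)⁻¹) ^ m) := by
  set W' : Set (ℝ × (Fin m → ℝ)) :=
    {p | |p.1| ≤ 1 ∧ (∀ j, |p.2 j| ≤ 1) ∧ |p.1| * ∏ j, |p.2 j| < t} with hW'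
  have hmW : MeasurableSet W' := by
    have h1 : MeasurableSet {p : ℝ × (Fin m → ℝ) | |p.1| ≤ 1} :=
      measurableSet_le (by fun_prop) (by fun_prop)
    have h2 : MeasurableSet {p : ℝ × (Fin m → ℝ) | ∀ j, |p.2 j| ≤ 1} := by
      rw [ofPred_forall]
      exact MeasurableSet.iInter fun j => measurableSet_le (by fun_prop) (by fun_prop)
    have h3 : MeasurableSet {p : ℝ × (Fin m → ℝ) | |p.1| * ∏ j, |p.2 j| < t} :=
      measurableSet_lt (by fun_prop) (by fun_prop)
    exact h1.inter (h2.inter h3)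
  have hpre : {w : Fin (m + 1) → ℝ | (∀ j, |w j| ≤ 1) ∧ ∏ j, |w j| < t} =
      MeasurableEquiv.piFinSuccAbove (fun _ => ℝ) 0 ⁻¹' W' := by
    ext w
    simp [hW', Fin.forall_fin_succ, Fin.prod_univ_succ, and_assoc, Fin.tail]
  rw [hpre, (volume_preserving_piFinSuccAbove (fun _ : Fin (m + 1) => ℝ) 0).measure_preimage
    hmW.nullMeasurableSet]
  rw [Measure.volume_eq_prod, Measure.prod_apply_symm hmW]
  -- for `s > 0` the junk value `0 ^ (-s) = 0` breaks the pointwise bound at a zero coordinate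
  have hae : ∀ᵐ u : Fin m → ℝ, ∀ j, u j ≠ 0 :=
    ae_all_iff.2 fun j => (Measure.quasiMeasurePreserving_eval
      (μ := fun _ : Fin m => (volume : Measure ℝ)) j).ae (Measure.ae_ne volume 0)
  calc ∫⁻ u : Fin m → ℝ, volume ((fun a => (a, u)) ⁻¹' W')
      ≤ ∫⁻ u : Fin m → ℝ, ENNReal.ofReal (2 * t ^ s) * ENNReal.ofReal
        (∏ j, (Iic (1 : ℝ)).indicator (fun r => r ^ (-s)) |u j|) := by
        apply lintegral_mono_ae
        filter_upwards [hae] with u hu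
        by_cases hu1 : ∀ j, |u j| ≤ 1
        · have hP : 0 < ∏ j, |u j| := Finset.prod_pos fun j _ => abs_pos.2 (hu j)
          have hy : 0 < t / ∏ j, |u j| := div_pos ht hP
          have hsub : (fun a => (a, u)) ⁻¹' W' ⊆
              Icc (-(min 1 (t / ∏ j, |u j|))) (min 1 (t / ∏ j, |u j|)) := by
            rintro a ⟨h1, -, h2⟩
            rw [mem_Icc, ← abs_le]
            exact le_min h1 ((lt_div_iff₀ hP).2 h2).le
          have hprod : ∏ j, (Iic (1 : ℝ)).indicator (fun r => r ^ (-s)) |u j| =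
              (∏ j, |u j|) ^ (-s) := by
            rw [← Real.finsetProd_rpow _ _ fun j _ => abs_nonneg _]
            exact Finset.prod_congr rfl fun j _ => indicator_of_mem (mem_Iic.2 (hu1 j)) _
          refine (measure_mono hsub).trans ?_
          rw [Real.volume_Icc, hprod, ← ENNReal.ofReal_mul (by positivity)]
          apply ENNReal.ofReal_le_ofReal
          have := min_le_rpow hy hs hs1
          rw [Real.div_rpow ht.le hP.le] at this
          rw [Real.rpow_neg hP.le, mul_assoc, ← div_eq_mul_inv]
          linarith
        · have : (fun a => (a, u)) ⁻¹' W' = ∅ := by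
            ext a
            simp only [hW', mem_preimage, mem_ofPred_eq, mem_empty_iff_false, iff_false]
            tauto
          rw [this, measure_empty]
          exact zero_le
    _ = ENNReal.ofReal (2 * t ^ s * (2 * (1 - s)⁻¹) ^ m) := by
        rw [lintegral_const_mul' _ _ ENNReal.ofReal_ne_top, lintegral_moment hs1,
          ← ENNReal.ofReal_mul (by positivity)]

/-- A coordinate bounded below by `η` drops out of the product, which leaves a hyperbolic cross in
one dimension less. This saves the factor `log (1 / t)` by which a full cube would be worse. -/
lemma volume_cross_slab (m : ℕ) (i : Fin (m + 2)) {t s η : ℝ} (ht : 0 < t) (hη : 0 < η)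
    (hs : 0 ≤ s) (hs1 : s < 1) :
    volume {v : Fin (m + 2) → ℝ | (∀ j, |v j| ≤ 1) ∧ η ≤ |v i| ∧ ∏ j, |v j| < t} ≤
      ENNReal.ofReal (4 * (t / η) ^ s * (2 * (1 - s)⁻¹) ^ m) := by
  set W : Set (Fin (m + 1) → ℝ) := {w | (∀ j, |w j| ≤ 1) ∧ ∏ j, |w j| < t / η} with hW
  have hmW : MeasurableSet W := by
    have h2 : MeasurableSet {p : Fin (m + 1) → ℝ | ∀ j, |p j| ≤ 1} := by
      rw [ofPred_forall]
      exact MeasurableSet.iInter fun j => measurableSet_le (by fun_prop) (by fun_prop)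
    have h3 : MeasurableSet {p : Fin (m + 1) → ℝ | ∏ j, |p j| < t / η} :=
      measurableSet_lt (by fun_prop) (by fun_prop)
    exact h2.inter h3
  have hsub : {v : Fin (m + 2) → ℝ | (∀ j, |v j| ≤ 1) ∧ η ≤ |v i| ∧ ∏ j, |v j| < t} ⊆
      MeasurableEquiv.piFinSuccAbove (fun _ => ℝ) i ⁻¹' (Icc (-1) 1 ×ˢ W) := by
    rintro v ⟨h1, h2, h3⟩
    refine ⟨abs_le.1 (h1 i), fun j => h1 _, ?_⟩
    rw [Fin.prod_univ_succAbove _ i] at h3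
    rw [lt_div_iff₀ hη, mul_comm]
    refine lt_of_le_of_lt (mul_le_mul_of_nonneg_right h2 ?_) h3
    exact Finset.prod_nonneg fun j _ => abs_nonneg _
  refine (measure_mono hsub).trans ?_
  rw [(volume_preserving_piFinSuccAbove (fun _ : Fin (m + 2) => ℝ) i).measure_preimage
    (measurableSet_Icc.prod hmW).nullMeasurableSet, Measure.volume_eq_prod, Measure.prod_prod,
    Real.volume_Icc]
  refine (mul_le_mul_right (volume_cross m (div_pos ht hη) hs hs1) _).trans ?_
  rw [← ENNReal.ofReal_mul (by norm_num)]
  apply le_of_eq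
  congr 1
  ring

/-! ### Rotations bringing a vector close to the coordinate hyperplanes -/

/-- The Euclidean shell `1/2 ≤ |v|₂ ≤ 1`. -/
def shell (d : ℕ) : Set (Fin d → ℝ) := {v | 1 / 4 ≤ v ⬝ᵥ v ∧ v ⬝ᵥ v ≤ 1}

/-- The cone `∏ |v j| < t * |v|₂ ^ d` around the coordinate hyperplanes. -/
def crossCone (d : ℕ) (t : ℝ) : Set (Fin d → ℝ) := {v | ∏ j, |v j| < t * √(v ⬝ᵥ v) ^ d}

lemma continuous_dot_self (d : ℕ) : Continuous fun v : Fin d → ℝ => v ⬝ᵥ v :=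
  continuous_id.dotProduct continuous_id

lemma measurableSet_shell (d : ℕ) : MeasurableSet (shell d) :=
  (measurableSet_le measurable_const (continuous_dot_self d).measurable).inter
    (measurableSet_le (continuous_dot_self d).measurable measurable_const)

lemma measurableSet_crossCone (d : ℕ) (t : ℝ) : MeasurableSet (crossCone d t) := by
  have := (continuous_dot_self d).measurable
  exact measurableSet_lt (by fun_prop) (by fun_prop)

lemma sq_le_dot {d : ℕ} (v : Fin d → ℝ) (j : Fin d) : v j ^ 2 ≤ v ⬝ᵥ v := by
  rw [sq]
  exact Finset.single_le_sum (f := fun i => v i * v i) (fun i _ => mul_self_nonneg _)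
    (Finset.mem_univ j)

lemma shell_abs_le {d : ℕ} {v : Fin d → ℝ} (hv : v ∈ shell d) (j : Fin d) : |v j| ≤ 1 :=
  (sq_le_one_iff_abs_le_one _).1 ((sq_le_dot v j).trans hv.2)

lemma volume_shell_cone (m : ℕ) {t s : ℝ} (ht : 0 < t) (hs : 0 ≤ s) (hs1 : s < 1) :
    volume (shell (m + 2) ∩ crossCone (m + 2) t) ≤
      ENNReal.ofReal ((m + 2) * (4 * (t / (1 / (2 * (m + 2)))) ^ s * (2 * (1 - s)⁻¹) ^ m)) := by
  set η : ℝ := 1 / (2 * (m + 2)) with hη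
  have hη0 : 0 < η := by positivity
  have hsub : shell (m + 2) ∩ crossCone (m + 2) t ⊆ ⋃ i : Fin (m + 2),
      {v : Fin (m + 2) → ℝ | (∀ j, |v j| ≤ 1) ∧ η ≤ |v i| ∧ ∏ j, |v j| < t} := by
    rintro v ⟨hv, hE⟩
    rw [mem_iUnion]
    have hprod : ∏ j, |v j| < t := by
      refine lt_of_lt_of_le hE ?_
      have : √(v ⬝ᵥ v) ^ (m + 2) ≤ 1 :=
        pow_le_one₀ (Real.sqrt_nonneg _) (Real.sqrt_le_one.2 hv.2)
      nlinarith
    by_contra! hcon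
    have hsmall : ∀ i, |v i| < η := by
      intro i
      by_contra! hi
      exact hcon i ⟨shell_abs_le hv, hi, hprod⟩
    have h1 : v ⬝ᵥ v ≤ ∑ _i : Fin (m + 2), η ^ 2 := by
      refine Finset.sum_le_sum fun i _ => ?_
      rw [← sq, ← sq_abs]
      exact pow_le_pow_left₀ (abs_nonneg _) (hsmall i).le 2
    have h2 : (∑ _i : Fin (m + 2), η ^ 2) < 1 / 4 := by
      simp only [Finset.sum_const, Finset.card_univ, Fintype.card_fin, nsmul_eq_mul, hη]
      have : (0 : ℝ) ≤ m := Nat.cast_nonneg m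
      push_cast
      rw [div_pow, one_pow, mul_one_div, div_lt_div_iff₀ (by positivity) (by norm_num)]
      nlinarith
    linarith [hv.1]
  refine (measure_mono hsub).trans ((measure_iUnion_le _).trans ?_)
  rw [tsum_fintype]
  refine (Finset.sum_le_sum fun i _ => volume_cross_slab m i ht hη0 hs hs1).trans ?_
  rw [Finset.sum_const, Finset.card_univ, Fintype.card_fin, nsmul_eq_mul,
    ← ENNReal.ofReal_natCast, ← ENNReal.ofReal_mul (Nat.cast_nonneg _)]
  push_cast
  rfl

lemma volume_shell_ne_zero (m : ℕ) : volume (shell (m + 2)) ≠ 0 := by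
  have ho : IsOpen {v : Fin (m + 2) → ℝ | 1 / 4 < v ⬝ᵥ v ∧ v ⬝ᵥ v < 1} :=
    (isOpen_lt continuous_const (continuous_dot_self _)).inter
      (isOpen_lt (continuous_dot_self _) continuous_const)
  have hne : {v : Fin (m + 2) → ℝ | 1 / 4 < v ⬝ᵥ v ∧ v ⬝ᵥ v < 1}.Nonempty :=
    ⟨Pi.single 0 (3 / 4), by
      simp only [mem_ofPred_eq, dotProduct_single, Pi.single_eq_same]
      norm_num⟩
  have := ho.measure_pos volume hne
  exact (lt_of_lt_of_le this (measure_mono fun v hv => And.intro hv.1.le hv.2.le)).ne'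

lemma volume_shell_ne_top (d : ℕ) : volume (shell d) ≠ ⊤ := by
  have hc : IsCompact (Set.pi univ fun _ : Fin d => Icc (-1 : ℝ) 1) :=
    isCompact_univ_pi fun _ => isCompact_Icc
  refine ((measure_mono ?_).trans_lt hc.measure_lt_top).ne
  intro v hv j _
  exact abs_le.1 (shell_abs_le hv j)

/-- A bound on the Haar measure of the rotations bringing a vector close to the coordinate
hyperplanes; `C` is uniform in the vector and in `s`, which may thus depend on `t`. -/
lemma exists_haar_bound (m : ℕ) (μ : Measure (SOGroup (m + 2))) [μ.IsHaarMeasure] :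
    ∃ C : ℝ, 0 < C ∧ ∀ x : Fin (m + 2) → ℝ, x ≠ 0 → ∀ t s : ℝ, 0 < t → 0 ≤ s → s < 1 →
      μ {U | (U.1.1).mulVec x ∈ crossCone (m + 2) t} ≤
        ENNReal.ofReal (C * (t ^ s * (1 - s)⁻¹ ^ m)) := by
  have hb0 := volume_shell_ne_zero m
  have hb1 := volume_shell_ne_top (m + 2)
  set b := (volume (shell (m + 2))).toReal with hb
  have hb' : 0 < b := ENNReal.toReal_pos hb0 hb1
  set M := (μ univ).toReal with hM
  have hM' : 0 < M := ENNReal.toReal_pos (NeZero.ne _) (measure_ne_top μ _)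
  refine ⟨M * b⁻¹ * ((m + 2) * 4 * (2 * (m + 2)) * 2 ^ m), by positivity, ?_⟩
  intro x hx t s ht hs hs1
  have h1s : 0 < 1 - s := by linarith
  have h := cone_measure (by omega) μ (measurableSet_crossCone (m + 2) t)
    (measurableSet_shell (m + 2)) ?_ ?_ ?_ hx
  · have h2 : μ {U | (U.1.1).mulVec x ∈ crossCone (m + 2) t} =
        μ univ * volume (shell (m + 2) ∩ crossCone (m + 2) t) / volume (shell (m + 2)) := by
      rw [← h, ENNReal.mul_div_cancel_right hb0 hb1]
    rw [h2, ← ENNReal.ofReal_toReal (measure_ne_top μ univ), ← ENNReal.ofReal_toReal hb1,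
      ← hb, ← hM]
    refine (ENNReal.div_le_div_right (mul_le_mul_right (volume_shell_cone m ht hs hs1) _) _).trans ?_
    rw [← ENNReal.ofReal_mul hM'.le, ← ENNReal.ofReal_div_of_pos hb']
    apply ENNReal.ofReal_le_ofReal
    have h3 : (t / (1 / (2 * ((m : ℝ) + 2)))) ^ s ≤ (2 * (m + 2)) * t ^ s := by
      rw [div_div_eq_mul_div, div_one, Real.mul_rpow ht.le (by positivity), mul_comm]
      apply mul_le_mul_of_nonneg_right _ (by positivity)
      calc (2 * ((m : ℝ) + 2)) ^ s ≤ (2 * ((m : ℝ) + 2)) ^ (1 : ℝ) := by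
            apply Real.rpow_le_rpow_of_exponent_le _ hs1.le
            have : (0 : ℝ) ≤ m := Nat.cast_nonneg m
            linarith
        _ = _ := Real.rpow_one _
    calc M * ((m + 2) * (4 * (t / (1 / (2 * ((m : ℝ) + 2)))) ^ s * (2 * (1 - s)⁻¹) ^ m)) / b
        ≤ M * ((m + 2) * (4 * ((2 * (m + 2)) * t ^ s) * (2 * (1 - s)⁻¹) ^ m)) / b := by gcongr
      _ = _ := by rw [mul_pow]; ring
  · intro c hc v hv
    have h1 : ((c • v) ⬝ᵥ (c • v)) = c ^ 2 * (v ⬝ᵥ v) := by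
      simp only [smul_dotProduct, dotProduct_smul, smul_eq_mul]; ring
    have h2 : ∏ j, |(c • v) j| = c ^ (m + 2) * ∏ j, |v j| := by
      simp [abs_mul, Finset.prod_mul_distrib, abs_of_pos hc]
    simp only [crossCone, mem_ofPred_eq] at hv ⊢
    rw [h1, h2, Real.sqrt_mul (sq_nonneg c), Real.sqrt_sq hc.le, mul_pow, mul_left_comm]
    exact mul_lt_mul_of_pos_left hv (pow_pos hc _)
  · intro U v
    simp only [shell, mem_ofPred_eq, dot_mulVec]
  · simp [shell]

/-- The event that a coordinate of `U x` vanishes is contained in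
`{U | U x ∈ crossCone (m + 2) t}` for every `t > 0`, whose measure tends to `0` with `t`. -/
lemma ae_prod_ne_zero (m : ℕ) (μ : Measure (SOGroup (m + 2))) [μ.IsHaarMeasure]
    {x : Fin (m + 2) → ℝ} (hx : x ≠ 0) : ∀ᵐ U ∂μ, ∏ j, |(U.1.1).mulVec x j| ≠ 0 := by
  obtain ⟨C, hC, h⟩ := exists_haar_bound m μ
  have hlim : Tendsto (fun t : ℝ => ENNReal.ofReal (C * (t ^ (1 / 2 : ℝ) *
      (1 - 1 / 2 : ℝ)⁻¹ ^ m))) (nhdsWithin 0 (Ioi 0)) (nhds 0) := by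
    rw [← ENNReal.ofReal_zero]
    apply (ENNReal.continuous_ofReal.tendsto _).comp
    have hc : Continuous fun t : ℝ => C * (t ^ (1 / 2 : ℝ) * (1 - 1 / 2 : ℝ)⁻¹ ^ m) := by
      have := Real.continuous_rpow_const (q := 1 / 2) (by norm_num)
      fun_prop
    have := hc.tendsto 0
    rw [Real.zero_rpow (by norm_num), zero_mul, mul_zero] at this
    exact this.mono_left nhdsWithin_le_nhds
  rw [ae_iff]
  refine le_antisymm (ge_of_tendsto hlim ?_) zero_le
  filter_upwards [self_mem_nhdsWithin] with t ht
  refine (measure_mono ?_).trans (h x hx t (1 / 2) ht (by norm_num) (by norm_num))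
  intro U hU
  have hU' : ∏ j, |(U.1.1).mulVec x j| = 0 := not_not.1 hU
  have hxx : 0 < x ⬝ᵥ x := lt_of_le_of_ne (Finset.sum_nonneg fun i _ => mul_self_nonneg (x i))
    (dot_self_ne_zero hx).symm
  simp only [crossCone, mem_ofPred_eq, hU', dot_mulVec]
  exact mul_pos ht (pow_pos (Real.sqrt_pos.2 hxx) _)

lemma norm_le_sqrt_dot {d : ℕ} (x : Fin d → ℝ) : ‖x‖ ≤ √(x ⬝ᵥ x) :=
  (pi_norm_le_iff_of_nonneg (Real.sqrt_nonneg _)).2 fun j => Real.abs_le_sqrt (sq_le_dot x j)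

lemma sqrt_dot_le {d : ℕ} (x : Fin d → ℝ) : √(x ⬝ᵥ x) ≤ d * ‖x‖ := by
  apply Real.sqrt_le_iff.2 ⟨by positivity, ?_⟩
  have h1 : x ⬝ᵥ x ≤ ∑ _i : Fin d, ‖x‖ ^ 2 := by
    refine Finset.sum_le_sum fun i _ => ?_
    rw [← sq, ← sq_abs]
    exact pow_le_pow_left₀ (abs_nonneg _) (norm_le_pi_norm x i) 2
  rw [Finset.sum_const, Finset.card_univ, Fintype.card_fin, nsmul_eq_mul] at h1
  have h2 : (d : ℝ) ≤ (d : ℝ) ^ 2 := by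
    exact_mod_cast Nat.le_self_pow (by norm_num) d
  rw [mul_pow]
  exact h1.trans (mul_le_mul_of_nonneg_right h2 (sq_nonneg _))

/-! ### Dyadic blocks of lattice points and Borel–Cantelli -/

/-- The lattice point with integer coordinates `z` in the basis `b`. -/
def latticePt {d : ℕ} (b : Fin d → Fin d → ℝ) (z : Fin d → ℤ) : Fin d → ℝ :=
  ∑ i, (z i : ℝ) • b i

/-- The rotated lattice points have norm at least a fixed multiple of that of their integer
coordinates, uniformly in the rotation. -/
lemma exists_lower_bound {d : ℕ} (hd : 0 < d) {b : Fin d → Fin d → ℝ}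
    (hb : LinearIndependent ℝ b) :
    ∃ κ : ℝ, 0 < κ ∧ κ ≤ 1 ∧ ∀ (z : Fin d → ℤ) (U : SOGroup d),
      κ * ‖fun i => (z i : ℝ)‖ ≤ ‖(U.1.1).mulVec (latticePt b z)‖ := by
  have hinj : Function.Injective (Fintype.linearCombination ℝ b) :=
    hb.fintypeLinearCombination_injective
  obtain ⟨K, hK, hanti⟩ := LinearMap.exists_antilipschitzWith (Fintype.linearCombination ℝ b)
    (LinearMap.ker_eq_bot.2 hinj)
  have hK' : (0 : ℝ) < K := hK
  have hd' : (0 : ℝ) < d := by exact_mod_cast hd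
  refine ⟨min 1 (1 / (K * d)), lt_min one_pos (one_div_pos.2 (mul_pos hK' hd')),
    min_le_left _ _, fun z U => ?_⟩
  have h1 : ‖fun i => (z i : ℝ)‖ ≤ K * ‖latticePt b z‖ := by
    have := hanti.le_mul_dist (fun i => (z i : ℝ)) 0
    simpa [dist_zero_right, Fintype.linearCombination_apply, latticePt] using this
  have h2 : ‖latticePt b z‖ ≤ d * ‖(U.1.1).mulVec (latticePt b z)‖ := by
    refine (norm_le_sqrt_dot _).trans ?_
    rw [← dot_mulVec U]
    exact sqrt_dot_le _
  calc min 1 (1 / (K * d)) * ‖fun i => (z i : ℝ)‖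
      ≤ (1 / (K * d)) * (K * (d * ‖(U.1.1).mulVec (latticePt b z)‖)) := by
        apply mul_le_mul (min_le_right _ _) _ (norm_nonneg _)
          (one_div_pos.2 (mul_pos hK' hd')).le
        exact h1.trans (mul_le_mul_of_nonneg_left h2 hK'.le)
    _ = _ := by field_simp

/-- The nonzero integer vectors of sup-norm in `[2 ^ k, 2 ^ (k + 1))`. -/
def dyadicBlock (d k : ℕ) : Set (Fin d → ℤ) :=
  {z | (2 : ℝ) ^ k ≤ ‖fun i => (z i : ℝ)‖ ∧ ‖fun i => (z i : ℝ)‖ < 2 ^ (k + 1)}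

/-- The integer vectors of sup-norm less than `2 ^ k`. -/
def intBox (d k : ℕ) : Finset (Fin d → ℤ) :=
  Fintype.piFinset fun _ => Finset.Ioo (-(2 ^ k : ℤ)) (2 ^ k)

lemma mem_intBox {d k : ℕ} {z : Fin d → ℤ} (h : ‖fun i => (z i : ℝ)‖ < 2 ^ k) :
    z ∈ intBox d k := by
  rw [intBox, Fintype.mem_piFinset]
  intro i
  have h1 := (norm_le_pi_norm (fun i => (z i : ℝ)) i).trans_lt h
  rw [Real.norm_eq_abs, abs_lt] at h1
  rw [Finset.mem_Ioo]
  exact ⟨by exact_mod_cast h1.1, by exact_mod_cast h1.2⟩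

lemma card_intBox (d k : ℕ) : (intBox d k).card ≤ (2 ^ (k + 1)) ^ d := by
  rw [intBox, Fintype.card_piFinset_const, Int.card_Ioo]
  apply Nat.pow_le_pow_left
  rw [pow_succ]
  have : ((2 ^ k : ℕ) : ℤ) = 2 ^ k := by push_cast; rfl
  omega

lemma exists_block {d : ℕ} {z : Fin d → ℤ} (hz : z ≠ 0) : ∃ k, z ∈ dyadicBlock d k := by
  obtain ⟨i, hi⟩ := Function.ne_iff.1 hz
  have h1 : (1 : ℝ) ≤ ‖fun i => (z i : ℝ)‖ := by
    refine le_trans ?_ (norm_le_pi_norm (fun i => (z i : ℝ)) i)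
    rw [Real.norm_eq_abs]
    exact_mod_cast Int.one_le_abs hi
  exact exists_nat_pow_near h1 one_lt_two

lemma block_ne_zero {d k : ℕ} {z : Fin d → ℤ} (hz : z ∈ dyadicBlock d k) : z ≠ 0 := by
  rintro rfl
  have h1 : (2 : ℝ) ^ k ≤ ‖fun _ : Fin d => ((0 : ℤ) : ℝ)‖ := hz.1
  have h2 : ‖fun _ : Fin d => ((0 : ℤ) : ℝ)‖ = 0 := by
    rw [Int.cast_zero]
    exact norm_zero
  rw [h2] at h1
  have : (0 : ℝ) < 2 ^ k := by positivity
  linarith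

/-- The numerical content of the Borel–Cantelli argument: `s` is chosen with `1 - s = 1 / (k + 2)`,
so that passing from `t` to `t ^ s` costs only a bounded factor. -/
lemma block_estimate (m k : ℕ) {κ ε : ℝ} (hκ : 0 < κ) (hκ1 : κ ≤ 1) (hε : 0 < ε) :
    (2 ^ (k + 2)) ^ (m + 2) *
      (((k + 1 : ℝ) ^ (-(m + 1 + ε)) / (κ * 2 ^ k) ^ (m + 2)) ^ (1 - 1 / (k + 2 : ℝ)) *
        (1 - (1 - 1 / (k + 2 : ℝ)))⁻¹ ^ m) ≤
    (4 ^ (m + 2) / κ ^ (m + 2) * 2 ^ (m + 1 + ε + (m + 2)) * 2 ^ m) *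
      (k + 1 : ℝ) ^ (-(1 + ε)) := by
  set a : ℝ := m + 1 + ε with ha
  have ha0 : 0 < a := by positivity
  have hk : (0 : ℝ) < (k : ℝ) + 1 := by positivity
  have hk2 : (0 : ℝ) < (k : ℝ) + 2 := by positivity
  set t : ℝ := (k + 1 : ℝ) ^ (-a) / (κ * 2 ^ k) ^ (m + 2) with ht
  have ht0 : 0 < t := by positivity
  have htinv : t⁻¹ ≤ (2 : ℝ) ^ ((k + 2 : ℝ) * (a + (m + 2))) := by
    rw [ht, inv_div, Real.rpow_neg hk.le, div_inv_eq_mul, mul_comm,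
      Real.rpow_mul (by norm_num), Real.rpow_add (by positivity) a (m + 2)]
    have h2 : (2 : ℝ) ^ ((k : ℝ) + 2) = 2 ^ (k + 2) := by exact_mod_cast Real.rpow_natCast 2 (k + 2)
    have h3 : ((2 : ℝ) ^ (k + 2)) ^ ((m : ℝ) + 2) = (2 ^ (k + 2)) ^ (m + 2) := by
      exact_mod_cast Real.rpow_natCast ((2 : ℝ) ^ (k + 2)) (m + 2)
    rw [h2, h3]
    have h4 : ((k : ℝ) + 1) ≤ 2 ^ (k + 2) := by
      have : k + 1 ≤ 2 ^ (k + 2) := by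
        have := Nat.lt_two_pow_self (n := k + 2)
        omega
      exact_mod_cast this
    have h5 : κ * 2 ^ k ≤ 2 ^ (k + 2) := by
      have h6 : (2 : ℝ) ^ k ≤ 2 ^ (k + 2) := pow_le_pow_right₀ one_le_two (by omega)
      have : (0 : ℝ) < 2 ^ k := by positivity
      nlinarith
    apply mul_le_mul _ _ (by positivity) (by positivity)
    · exact Real.rpow_le_rpow hk.le h4 ha0.le
    · exact pow_le_pow_left₀ (by positivity) h5 _
  have hts : t ^ (1 - 1 / (k + 2 : ℝ)) ≤ t * 2 ^ (a + (m + 2)) := by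
    rw [sub_eq_add_neg, Real.rpow_add ht0, Real.rpow_one, Real.rpow_neg ht0.le,
      ← Real.inv_rpow ht0.le]
    apply mul_le_mul_of_nonneg_left _ ht0.le
    calc t⁻¹ ^ (1 / (k + 2 : ℝ))
        ≤ ((2 : ℝ) ^ ((k + 2 : ℝ) * (a + (m + 2)))) ^ (1 / (k + 2 : ℝ)) :=
          Real.rpow_le_rpow (by positivity) htinv (by positivity)
      _ = 2 ^ (a + (m + 2)) := by
          rw [← Real.rpow_mul (by norm_num)]
          congr 1
          field_simp
  have hm : (1 - (1 - 1 / (k + 2 : ℝ)))⁻¹ ^ m ≤ 2 ^ m * (k + 1 : ℝ) ^ (m : ℝ) := by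
    rw [sub_sub_cancel, one_div, inv_inv, Real.rpow_natCast, ← mul_pow]
    apply pow_le_pow_left₀ hk2.le
    linarith
  have hsplit : (k + 1 : ℝ) ^ (-(1 + ε)) = (k + 1 : ℝ) ^ (-a) * (k + 1 : ℝ) ^ (m : ℝ) := by
    rw [← Real.rpow_add hk]
    congr 1
    rw [ha]; ring
  calc _ ≤ (2 ^ (k + 2)) ^ (m + 2) * ((t * 2 ^ (a + (m + 2))) *
        (2 ^ m * (k + 1 : ℝ) ^ (m : ℝ))) := by
        gcongr
        rw [sub_sub_cancel]
        positivity
    _ = _ := by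
        rw [hsplit, ht, pow_add 2 k 2, mul_pow, mul_pow]
        have : ((2 : ℝ) ^ k) ^ (m + 2) ≠ 0 := by positivity
        field_simp
        norm_num

/-- The rotations for which some lattice point of the `k`-th block is too close to the coordinate
hyperplanes. -/
def badSet {d : ℕ} (b : Fin d → Fin d → ℝ) (a : ℝ) (k : ℕ) : Set (SOGroup d) :=
  {U | ∃ z ∈ dyadicBlock d k, ∏ j, |(U.1.1).mulVec (latticePt b z) j| < (k + 1 : ℝ) ^ (-a)}

lemma ae_eventually_good (m : ℕ) (μ : Measure (SOGroup (m + 2))) [μ.IsHaarMeasure]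
    {b : Fin (m + 2) → Fin (m + 2) → ℝ} (hb : LinearIndependent ℝ b) {ε : ℝ} (hε : 0 < ε) :
    ∀ᵐ U ∂μ, ∀ᶠ k in atTop, U ∉ badSet b (m + 1 + ε) k := by
  obtain ⟨κ, hκ, hκ1, hlow⟩ := exists_lower_bound (by omega) hb
  obtain ⟨C, hC, hmeas⟩ := exists_haar_bound m μ
  set D : ℝ := 4 ^ (m + 2) / κ ^ (m + 2) * 2 ^ (m + 1 + ε + (m + 2)) * 2 ^ m with hD
  have hbound : ∀ k : ℕ, μ (badSet b (m + 1 + ε) k) ≤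
      ENNReal.ofReal (C * D * (k + 1 : ℝ) ^ (-(1 + ε))) := by
    intro k
    classical
    set t : ℝ := (k + 1 : ℝ) ^ (-(m + 1 + ε)) / (κ * 2 ^ k) ^ (m + 2) with ht
    have ht0 : 0 < t := by positivity
    have hk2 : (0 : ℝ) < (k : ℝ) + 2 := by positivity
    set s : ℝ := 1 - 1 / (k + 2 : ℝ) with hs
    have hs0 : 0 ≤ s := by
      rw [hs, sub_nonneg, div_le_one hk2]
      have : (0 : ℝ) ≤ k := Nat.cast_nonneg k
      linarith
    have hs1 : s < 1 := by
      have : 0 < 1 / (k + 2 : ℝ) := by positivity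
      linarith
    set F := (intBox (m + 2) (k + 1)).filter (· ∈ dyadicBlock (m + 2) k) with hF
    have hsub : badSet b (m + 1 + ε) k ⊆
        ⋃ z ∈ F, {U | (U.1.1).mulVec (latticePt b z) ∈ crossCone (m + 2) t} := by
      rintro U ⟨z, hz, hU⟩
      simp only [mem_iUnion]
      refine ⟨z, Finset.mem_filter.2 ⟨mem_intBox hz.2, hz⟩, ?_⟩
      simp only [crossCone, mem_ofPred_eq]
      refine hU.trans_le ?_
      have h1 : κ * 2 ^ k ≤ √((U.1.1).mulVec (latticePt b z) ⬝ᵥ (U.1.1).mulVec (latticePt b z)) :=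
        (mul_le_mul_of_nonneg_left hz.1 hκ.le).trans ((hlow z U).trans (norm_le_sqrt_dot _))
      have h2 := pow_le_pow_left₀ (by positivity) h1 (m + 2)
      calc (k + 1 : ℝ) ^ (-(m + 1 + ε)) = t * (κ * 2 ^ k) ^ (m + 2) := by
            rw [ht, div_mul_cancel₀ _ (by positivity)]
        _ ≤ _ := mul_le_mul_of_nonneg_left h2 ht0.le
    have hcard : (F.card : ℝ) ≤ (2 ^ (k + 2)) ^ (m + 2) := by
      exact_mod_cast (Finset.card_filter_le _ _).trans (card_intBox (m + 2) (k + 1))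
    refine (measure_mono hsub).trans ((measure_biUnion_finset_le _ _).trans ?_)
    calc ∑ z ∈ F, μ {U | (U.1.1).mulVec (latticePt b z) ∈ crossCone (m + 2) t}
        ≤ ∑ _z ∈ F, ENNReal.ofReal (C * (t ^ s * (1 - s)⁻¹ ^ m)) := by
          refine Finset.sum_le_sum fun z hz => hmeas _ ?_ t s ht0 hs0 hs1
          intro h0
          have hz' := (Finset.mem_filter.1 hz).2
          have h1 := hlow z 1
          rw [h0, Matrix.mulVec_zero, norm_zero] at h1
          have h2 : (0 : ℝ) < 2 ^ k := by positivity
          have h3 := mul_pos hκ (h2.trans_le hz'.1)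
          linarith
      _ = ENNReal.ofReal (F.card * (C * (t ^ s * (1 - s)⁻¹ ^ m))) := by
          rw [Finset.sum_const, nsmul_eq_mul, ← ENNReal.ofReal_natCast,
            ← ENNReal.ofReal_mul (Nat.cast_nonneg _)]
      _ ≤ _ := by
          apply ENNReal.ofReal_le_ofReal
          have h1 := block_estimate m k hκ hκ1 hε
          rw [← ht, ← hs, ← hD] at h1
          have h1s : 0 < 1 - s := by linarith
          calc F.card * (C * (t ^ s * (1 - s)⁻¹ ^ m))
              ≤ (2 ^ (k + 2)) ^ (m + 2) * (C * (t ^ s * (1 - s)⁻¹ ^ m)) :=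
                mul_le_mul_of_nonneg_right hcard (by positivity)
            _ = C * ((2 ^ (k + 2)) ^ (m + 2) * (t ^ s * (1 - s)⁻¹ ^ m)) := by ring
            _ ≤ C * (D * (k + 1 : ℝ) ^ (-(1 + ε))) := mul_le_mul_of_nonneg_left h1 hC.le
            _ = _ := by ring
  apply ae_eventually_notMem
  have hsum : Summable fun k : ℕ => C * D * (k + 1 : ℝ) ^ (-(1 + ε)) := by
    apply Summable.mul_left
    have h1 : Summable fun n : ℕ => (n : ℝ) ^ (-(1 + ε)) := Real.summable_nat_rpow.2 (by linarith)
    simpa using (summable_nat_add_iff 1).2 h1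
  exact ne_top_of_le_ne_top hsum.tsum_ofReal_ne_top (ENNReal.tsum_le_tsum hbound)

lemma exists_uniform_pos {ι : Type*} (Z : Finset ι) (f : ι → ℝ) (hf : ∀ z ∈ Z, 0 < f z) :
    ∃ c, 0 < c ∧ ∀ z ∈ Z, c ≤ f z := by
  rcases Z.eq_empty_or_nonempty with rfl | hne
  · exact ⟨1, one_pos, by simp⟩
  · obtain ⟨w, hw, hmin⟩ := Z.exists_min_image f hne
    exact ⟨f w, hf w hw, hmin⟩

/-- The lower bound `log (1 + κ N) ≥ κ log (1 + N)` is Bernoulli's inequality. -/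
lemma log_lower {κ N : ℝ} (hκ : 0 < κ) (hκ1 : κ ≤ 1) (k : ℕ) (hN : κ * 2 ^ k ≤ N) :
    κ * (Real.log 2 / 2) * (k + 1) ≤ Real.log (1 + N) := by
  have hp : (0 : ℝ) < 2 ^ k := by positivity
  have h1 : κ * Real.log (1 + 2 ^ k) ≤ Real.log (1 + N) := by
    rw [← Real.log_rpow (by positivity)]
    apply Real.log_le_log (by positivity)
    have := rpow_one_add_le_one_add_mul_self (s := (2 : ℝ) ^ k) (by linarith) hκ.le hκ1
    linarith
  have h2 : (k : ℝ) * Real.log 2 ≤ Real.log (1 + 2 ^ k) := by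
    rw [← Real.log_pow]
    exact Real.log_le_log hp (by linarith)
  have h3 : Real.log 2 ≤ Real.log (1 + 2 ^ k) := by
    apply Real.log_le_log (by norm_num)
    have := one_le_pow₀ (M₀ := ℝ) one_le_two (n := k)
    linarith
  calc κ * (Real.log 2 / 2) * (k + 1) ≤ κ * Real.log (1 + 2 ^ k) := by
        rw [mul_assoc]
        apply mul_le_mul_of_nonneg_left _ hκ.le
        linarith
    _ ≤ _ := h1

/-! ### Almost every rotation is admissible -/

/-- For any full-rank lattice `Λ ⊂ ℝ^d` and any `ε > 0`, for Haar-almost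
every `U ∈ SO(d)` there is `c > 0` such that every `y ∈ UΛ \ {0}` satisfies
`∏ j |y j| ≥ c · (log(1 + |y|))^{1−d−ε}`, with `|y| = ‖y‖` the sup-norm. -/
theorem skriganov_corollary (d : ℕ) (hd : 2 ≤ d)
    (Λ : Set (Fin d → ℝ)) (hΛ : IsFullLattice Λ)
    (ε : ℝ) (hε : 0 < ε)
    (μ : Measure ↥(SOGroup d)) (hμ : μ.IsHaarMeasure) :
    ∀ᵐ (U : ↥(SOGroup d)) ∂μ, ∃ c : ℝ, 0 < c ∧
      ∀ y ∈ (fun x => Matrix.mulVec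
          ((U : ↥(Matrix.orthogonalGroup (Fin d) ℝ)) : Matrix (Fin d) (Fin d) ℝ) x) '' Λ,
        y ≠ 0 →
          c * (Real.log (1 + ‖y‖)) ^ ((1 : ℝ) - d - ε) ≤ ∏ j, |y j| := by
  obtain ⟨m, rfl⟩ : ∃ m, d = m + 2 := ⟨d - 2, by omega⟩
  obtain ⟨b, hb, rfl⟩ := hΛ
  obtain ⟨κ, hκ, hκ1, hlow⟩ := exists_lower_bound (by omega) hb
  have hpt : ∀ z : Fin (m + 2) → ℤ, z ≠ 0 → latticePt b z ≠ 0 := by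
    intro z hz h0
    obtain ⟨k, hk⟩ := exists_block hz
    have h1 := hlow z 1
    rw [h0, Matrix.mulVec_zero, norm_zero] at h1
    have h2 : (0 : ℝ) < 2 ^ k := by positivity
    have h3 := mul_pos hκ (h2.trans_le hk.1)
    linarith
  have hne : ∀ᵐ U ∂μ, ∀ z : Fin (m + 2) → ℤ, z ≠ 0 →
      ∏ j, |(U.1.1).mulVec (latticePt b z) j| ≠ 0 := by
    refine ae_all_iff.2 fun z => ?_
    by_cases hz : z = 0
    · exact Eventually.of_forall fun U h => absurd hz h
    · filter_upwards [ae_prod_ne_zero m μ (hpt z hz)] with U hU _ using hU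
  filter_upwards [hne, ae_eventually_good m μ hb hε] with U hU hgood
  obtain ⟨k₀, hk₀⟩ := eventually_atTop.1 hgood
  set a : ℝ := m + 1 + ε with ha
  have ha0 : 0 < a := by positivity
  have hexp : (1 : ℝ) - ((m + 2 : ℕ) : ℝ) - ε = -a := by
    rw [ha]; push_cast; ring
  rw [hexp]
  set P : (Fin (m + 2) → ℤ) → ℝ := fun z => ∏ j, |(U.1.1).mulVec (latticePt b z) j| with hP
  set X : (Fin (m + 2) → ℤ) → ℝ :=
    fun z => Real.log (1 + ‖(U.1.1).mulVec (latticePt b z)‖) with hX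
  set c₁ : ℝ := κ * (Real.log 2 / 2) with hc₁
  have hc₁0 : 0 < c₁ := mul_pos hκ (half_pos (Real.log_pos one_lt_two))
  have hXlow : ∀ k, ∀ z ∈ dyadicBlock (m + 2) k, c₁ * (k + 1) ≤ X z := fun k z hz =>
    log_lower hκ hκ1 k ((mul_le_mul_of_nonneg_left hz.1 hκ.le).trans (hlow z U))
  have hXpos : ∀ z, z ≠ 0 → 0 < X z := by
    intro z hz
    obtain ⟨k, hk⟩ := exists_block hz
    exact lt_of_lt_of_le (by positivity) (hXlow k z hk)
  obtain ⟨c₀, hc₀, hfin⟩ := exists_uniform_pos ((intBox (m + 2) k₀).filter (· ≠ 0))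
    (fun z => P z / X z ^ (-a)) (by
      intro z hz
      have hz0 := (Finset.mem_filter.1 hz).2
      refine div_pos ?_ (Real.rpow_pos_of_pos (hXpos z hz0) _)
      exact lt_of_le_of_ne (Finset.prod_nonneg fun j _ => abs_nonneg _) (hU z hz0).symm)
  refine ⟨min c₀ (c₁ ^ a), lt_min hc₀ (Real.rpow_pos_of_pos hc₁0 _), ?_⟩
  rintro y ⟨x, ⟨z, rfl⟩, rfl⟩ hy
  have hz : z ≠ 0 := by
    rintro rfl
    simp at hy
  change min c₀ (c₁ ^ a) * X z ^ (-a) ≤ P z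
  have hXa : 0 < X z ^ (-a) := Real.rpow_pos_of_pos (hXpos z hz) _
  obtain ⟨k, hk⟩ := exists_block hz
  rcases lt_or_ge k k₀ with hlt | hge
  · have hmem : z ∈ intBox (m + 2) k₀ :=
      mem_intBox (hk.2.trans_le (pow_le_pow_right₀ one_le_two hlt))
    have h1 := hfin z (Finset.mem_filter.2 ⟨hmem, hz⟩)
    rw [le_div_iff₀ hXa] at h1
    exact (mul_le_mul_of_nonneg_right (min_le_left _ _) hXa.le).trans h1
  · have h1 : (k + 1 : ℝ) ^ (-a) ≤ P z := by
      by_contra! h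
      exact hk₀ k hge ⟨z, hk, h⟩
    have hk1 : (0 : ℝ) < (k : ℝ) + 1 := by positivity
    have h2 : X z ^ (-a) ≤ (c₁ * (k + 1)) ^ (-a) :=
      Real.rpow_le_rpow_of_nonpos (by positivity) (hXlow k z hk) (by linarith)
    calc min c₀ (c₁ ^ a) * X z ^ (-a) ≤ c₁ ^ a * (c₁ * (k + 1)) ^ (-a) :=
          mul_le_mul (min_le_right _ _) h2 hXa.le (by positivity)
      _ = (k + 1 : ℝ) ^ (-a) := by
          rw [Real.mul_rpow hc₁0.le hk1.le, ← mul_assoc, ← Real.rpow_add hc₁0, add_neg_cancel,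
            Real.rpow_zero, one_mul]
      _ ≤ P z := h1
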